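/- Let T : M → M be any mapping. Then T commutes with the probability distortion T_d for every right-continuous distortion function d ∈ F_D^R if and only if there exists an increasing left-continuous u : ℝ → ℝ such that T = T^u. -/

import Mathlib

/-! Both kinds of transformation are read off left quantiles: `T^u` replaces the quantile function
`Q` of `F` by `u ∘ Q`, while `T_d` replaces it by `Q ∘ e`, with `e` the generalized inverse of `d`.
Composition on the left commutes with composition on the right, and a cdf is determined by its
quantiles.

Conversely, the step distortion `1_{[p, ∞)}` turns `F` into the point mass at its `p`-quantile.
Hence, if `T` commutes with step distortions, the `p`-quantile of `T F` is `u (Q p)`, where `u q`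
is the `1`-quantile of the image of the point mass at `q`. A uniform `F` exhibits `u`, up to an
affine change of variable, as a quantile function on any bounded interval, so `u` is increasing and
left-continuous; thus `T F` and `T^u F` have the same quantiles. -/

open MeasureTheory Filter Topology Set

noncomputable section

/-- The set of cdfs of compactly supported probability distributions on ℝ:
increasing, right-continuous, equal to `0` for all sufficiently small `x` and
equal to `1` for all sufficiently large `x`. -/
def mSet : Set (ℝ → ℝ) :=
  {F | Monotone F ∧ (∀ x, ContinuousWithinAt F (Set.Ici x) x) ∧
    (∃ a, ∀ x ≤ a, F x = 0) ∧ (∃ b, ∀ x, b ≤ x → F x = 1)}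

/-- The set of cdfs of all probability distributions on ℝ: increasing,
right-continuous, with limit `0` at `-∞` and limit `1` at `+∞`. -/
def m0Set : Set (ℝ → ℝ) :=
  {F | Monotone F ∧ (∀ x, ContinuousWithinAt F (Set.Ici x) x) ∧
    Tendsto F atBot (𝓝 0) ∧ Tendsto F atTop (𝓝 1)}

/-- A utility function: increasing (non-strict) and continuous. -/
def IsUF (u : ℝ → ℝ) : Prop := Monotone u ∧ Continuous u

/-- An increasing and left-continuous function on ℝ. -/
def IsLeftCtsIncr (u : ℝ → ℝ) : Prop :=
  Monotone u ∧ ∀ x, ContinuousWithinAt u (Set.Iic x) x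

/-- A distortion function: an increasing function `d : [0,1] → [0,1]` with
`d 0 = 0` and `d 1 = 1` (values outside `[0,1]` are irrelevant). -/
def IsDF (d : ℝ → ℝ) : Prop :=
  MonotoneOn d (Set.Icc 0 1) ∧ d 0 = 0 ∧ d 1 = 1

/-- Right-continuity of a distortion function on `[0,1)`. -/
def DFRightCts (d : ℝ → ℝ) : Prop :=
  ∀ x ∈ Set.Ico (0:ℝ) 1, ContinuousWithinAt d (Set.Ioi x) x

/-- A distortion function with moreover `d(0+) = 0` and `d(1-) = 1`. -/
def IsDFhat (d : ℝ → ℝ) : Prop :=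
  IsDF d ∧ Tendsto d (𝓝[>] (0:ℝ)) (𝓝 0) ∧ Tendsto d (𝓝[<] (1:ℝ)) (𝓝 1)

/-- The probability distortion generated by `d`:  `T_d F x = (d ∘ F)(x+)`,
the right limit of `d ∘ F` at `x`. -/
noncomputable def distortT (d F : ℝ → ℝ) : ℝ → ℝ :=
  fun x => Function.rightLim (d ∘ F) x

/-- The utility transform `T^u`: it maps a cdf `F` to the cdf of the
pushforward under `u` of the probability measure with cdf `F`. -/
noncomputable def utilityT (u F : ℝ → ℝ) : ℝ → ℝ := by
  classical
  exact
    if h : Monotone F ∧ ∀ x, ContinuousWithinAt F (Set.Ici x) x then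
      fun x => ((StieltjesFunction.measure ⟨F, h.1, h.2⟩).map u (Set.Iic x)).toReal
    else F

/-- Left quantile `F_L^{-1}(p) = inf {x | F x ≥ p}`. -/
noncomputable def leftQ (F : ℝ → ℝ) (p : ℝ) : ℝ := sInf {x | p ≤ F x}

/-- Right quantile `F_R^{-1}(p) = inf {x | F x > p}`. -/
noncomputable def rightQ (F : ℝ → ℝ) (p : ℝ) : ℝ := sInf {x | p < F x}

lemma mSet_subset_m0Set : mSet ⊆ m0Set := by
  rintro F ⟨hmono, hright, ⟨a, ha⟩, ⟨b, hb⟩⟩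
  exact ⟨hmono, hright,
    tendsto_const_nhds.congr' ((eventually_le_atBot a).mono fun x hx => (ha x hx).symm),
    tendsto_const_nhds.congr' ((eventually_ge_atTop b).mono fun x hx => (hb x hx).symm)⟩

lemma mem_Icc_of_mem_m0Set {F : ℝ → ℝ} (hF : F ∈ m0Set) (x : ℝ) : F x ∈ Icc (0 : ℝ) 1 :=
  ⟨hF.1.le_of_tendsto hF.2.2.1 x, hF.1.ge_of_tendsto hF.2.2.2 x⟩

lemma mem_Icc_of_mem_mSet {F : ℝ → ℝ} (hF : F ∈ mSet) (x : ℝ) : F x ∈ Icc (0 : ℝ) 1 :=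
  mem_Icc_of_mem_m0Set (mSet_subset_m0Set hF) x

section Quantile

variable {F G : ℝ → ℝ} {p x : ℝ}

lemma leftQ_le_iff_of_exists (hmono : Monotone F)
    (hright : ∀ x, ContinuousWithinAt F (Ici x) x) (hlt : ∃ x, F x < p) (hle : ∃ x, p ≤ F x) :
    leftQ F p ≤ x ↔ p ≤ F x := by
  obtain ⟨a, ha⟩ := hlt
  have hbdd : BddBelow {x | p ≤ F x} := ⟨a, fun z hz => (hmono.reflect_lt (ha.trans_le hz)).le⟩
  refine ⟨fun hx => ?_, fun hx => csInf_le hbdd hx⟩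
  have hgt : ∀ y ∈ Ioi x, p ≤ F y := fun y hy => by
    obtain ⟨z, hz, hzy⟩ := exists_lt_of_csInf_lt hle (hx.trans_lt hy)
    exact le_trans hz (hmono hzy.le)
  exact ge_of_tendsto ((hright x).mono Ioi_subset_Ici_self)
    (eventually_of_mem self_mem_nhdsWithin hgt)

lemma leftQ_le_iff (hF : F ∈ mSet) (hp : p ∈ Ioc (0 : ℝ) 1) : leftQ F p ≤ x ↔ p ≤ F x := by
  obtain ⟨hmono, hright, ⟨a, ha⟩, ⟨b, hb⟩⟩ := hF
  exact leftQ_le_iff_of_exists hmono hright ⟨a, by simpa [ha a le_rfl] using hp.1⟩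
    ⟨b, by simpa [hb b le_rfl] using hp.2⟩

lemma lt_leftQ_iff (hF : F ∈ mSet) (hp : p ∈ Ioc (0 : ℝ) 1) : x < leftQ F p ↔ F x < p := by
  simpa only [not_le] using (leftQ_le_iff hF hp).not

lemma le_of_forall_leftQ_le (hF : F ∈ mSet) (hG : G ∈ mSet)
    (h : ∀ p ∈ Ioc (0 : ℝ) 1, leftQ G p ≤ leftQ F p) : F ≤ G := by
  intro x
  obtain ⟨h0, h1⟩ := mem_Icc_of_mem_mSet hF x
  rcases h0.eq_or_lt with h0 | h0
  · exact h0 ▸ (mem_Icc_of_mem_mSet hG x).1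
  · have hp : F x ∈ Ioc (0 : ℝ) 1 := ⟨h0, h1⟩
    exact (leftQ_le_iff hG hp).1 ((h _ hp).trans ((leftQ_le_iff hF hp).2 le_rfl))

lemma eq_of_forall_leftQ_eq (hF : F ∈ mSet) (hG : G ∈ mSet)
    (h : ∀ p ∈ Ioc (0 : ℝ) 1, leftQ F p = leftQ G p) : F = G :=
  le_antisymm (le_of_forall_leftQ_le hF hG fun p hp => (h p hp).ge)
    (le_of_forall_leftQ_le hG hF fun p hp => (h p hp).le)

lemma monotoneOn_leftQ (hF : F ∈ mSet) : MonotoneOn (leftQ F) (Ioc 0 1) := fun _ hp _ hq hpq =>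
  (leftQ_le_iff hF hp).2 (hpq.trans ((leftQ_le_iff hF hq).1 le_rfl))

lemma continuousWithinAt_leftQ (hF : F ∈ mSet) (hp : p ∈ Ioc (0 : ℝ) 1) :
    ContinuousWithinAt (leftQ F) (Iic p) p := by
  have hIoc : ∀ᶠ q in 𝓝[≤] p, q ∈ Ioc 0 p := Ioc_mem_nhdsLE hp.1
  refine tendsto_order.2 ⟨fun c hc => ?_, fun c hc => ?_⟩
  · filter_upwards [hIoc, Ioc_mem_nhdsLE ((lt_leftQ_iff hF hp).1 hc)] with q hq hcq
    exact (lt_leftQ_iff hF ⟨hq.1, hq.2.trans hp.2⟩).2 hcq.1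
  · filter_upwards [hIoc] with q hq
    exact (monotoneOn_leftQ hF ⟨hq.1, hq.2.trans hp.2⟩ hp hq.2).trans_lt hc

end Quantile

section Uniform

/-- The cdf of the uniform distribution on `[a, b]`, for `a < b`; its quantiles fill `(a, b]`. -/
def uniformCdf (a b : ℝ) : ℝ → ℝ := fun x => max 0 (min 1 ((x - a) / (b - a)))

variable {a b x : ℝ}

lemma uniformCdf_mem_mSet (h : a < b) : uniformCdf a b ∈ mSet := by
  have hba : 0 < b - a := sub_pos.2 h
  refine ⟨fun x y hxy => ?_, fun x => ?_, ⟨a, fun x hx => ?_⟩, ⟨b, fun x hx => ?_⟩⟩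
  · unfold uniformCdf
    gcongr
  · have hcont : Continuous (uniformCdf a b) := by unfold uniformCdf; fun_prop
    exact hcont.continuousWithinAt
  · have hle : (x - a) / (b - a) ≤ 0 := div_nonpos_of_nonpos_of_nonneg (by linarith) hba.le
    exact max_eq_left ((min_le_right _ _).trans hle)
  · have hle : 1 ≤ (x - a) / (b - a) := (one_le_div hba).2 (by linarith)
    simp [uniformCdf, min_eq_left hle]

lemma uniformCdf_zero_one_of_mem_Icc (hx : x ∈ Icc (0 : ℝ) 1) : uniformCdf 0 1 x = x := by
  simp [uniformCdf, hx.1, hx.2]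

lemma sub_div_sub_mem_Ioc (hx : x ∈ Ioc a b) : (x - a) / (b - a) ∈ Ioc (0 : ℝ) 1 := by
  have hba : 0 < b - a := sub_pos.2 (hx.1.trans_le hx.2)
  exact ⟨div_pos (sub_pos.2 hx.1) hba, (div_le_one hba).2 (by linarith [hx.2])⟩

lemma leftQ_uniformCdf (hx : x ∈ Ioc a b) : leftQ (uniformCdf a b) ((x - a) / (b - a)) = x := by
  have hba : 0 < b - a := sub_pos.2 (hx.1.trans_le hx.2)
  obtain ⟨h0, h1⟩ := sub_div_sub_mem_Ioc hx
  have hset : {z | (x - a) / (b - a) ≤ uniformCdf a b z} = Ici x := by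
    ext z
    simp only [uniformCdf, mem_ofPred_eq, mem_Ici, le_max_iff, le_min_iff, h0.not_ge, h1,
      false_or, true_and, div_le_div_iff_of_pos_right hba, sub_le_sub_iff_right]
  rw [leftQ, hset, csInf_Ici]

end Uniform

section Distortion

variable {d F : ℝ → ℝ} {p : ℝ}

lemma comp_mem_mSet (hd : IsDF d) (hr : DFRightCts d) (hF : F ∈ mSet) : d ∘ F ∈ mSet := by
  have hI := mem_Icc_of_mem_mSet hF
  obtain ⟨hmono, hright, ⟨a, ha⟩, ⟨b, hb⟩⟩ := hF
  refine ⟨fun x y hxy => hd.1 (hI x) (hI y) (hmono hxy), fun x => ?_,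
    ⟨a, fun x hx => by simp [ha x hx, hd.2.1]⟩, ⟨b, fun x hx => by simp [hb x hx, hd.2.2]⟩⟩
  rcases (hI x).2.lt_or_eq with h | h
  · exact (continuousWithinAt_Ioi_iff_Ici.1 (hr _ ⟨(hI x).1, h⟩)).comp (hright x)
      fun y hy => hmono hy
  · -- `d` need not be right-continuous at `1`, but `d ∘ F` is constant to the right of `x`.
    have hconst : ∀ y ∈ Ici x, (d ∘ F) y = 1 := fun y hy => by
      have hy1 : F y = 1 := le_antisymm (hI y).2 (h ▸ hmono hy)
      rw [Function.comp_apply, hy1, hd.2.2]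
    exact continuousWithinAt_const.congr hconst (hconst x self_mem_Ici)

lemma distortT_eq_comp (hd : IsDF d) (hr : DFRightCts d) (hF : F ∈ mSet) :
    distortT d F = d ∘ F :=
  funext fun x =>
    rightLim_eq_of_tendsto (((comp_mem_mSet hd hr hF).2.1 x).mono Ioi_subset_Ici_self)

lemma exists_le_apply_iff (hd : IsDF d) (hr : DFRightCts d) (hp : p ∈ Ioc (0 : ℝ) 1) :
    ∃ s ∈ Ioc (0 : ℝ) 1, ∀ t ∈ Icc (0 : ℝ) 1, p ≤ d t ↔ s ≤ t := by
  -- Composing with the uniform cdf clamps the argument of `d` to `[0, 1]` and makes `d` a cdf.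
  have hle_iff : ∀ t ∈ Icc (0 : ℝ) 1, p ≤ d t ↔ leftQ (d ∘ uniformCdf 0 1) p ≤ t :=
    fun t ht => by
      rw [leftQ_le_iff (comp_mem_mSet hd hr (uniformCdf_mem_mSet one_pos)) hp,
        Function.comp_apply, uniformCdf_zero_one_of_mem_Icc ht]
  refine ⟨_, ⟨not_le.1 fun h => ?_, (hle_iff 1 (by simp)).1 (hd.2.2.symm ▸ hp.2)⟩, hle_iff⟩
  have hp0 : p ≤ d 0 := (hle_iff 0 (by simp)).2 h
  exact hp.1.not_ge (hd.2.1 ▸ hp0)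

lemma exists_leftQ_comp_eq (hd : IsDF d) (hr : DFRightCts d) (hp : p ∈ Ioc (0 : ℝ) 1) :
    ∃ s ∈ Ioc (0 : ℝ) 1, ∀ F ∈ mSet, leftQ (d ∘ F) p = leftQ F s := by
  obtain ⟨s, hs, hle_iff⟩ := exists_le_apply_iff hd hr hp
  refine ⟨s, hs, fun F hF => ?_⟩
  simp only [leftQ, Function.comp_apply, hle_iff _ (mem_Icc_of_mem_mSet hF _)]

end Distortion

section Utility

variable {u F : ℝ → ℝ} {p x y : ℝ}

/-- The probability measure on `ℝ` with cdf `F`. -/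
def cdfMeasure (hF : F ∈ m0Set) : Measure ℝ := StieltjesFunction.measure ⟨F, hF.1, hF.2.1⟩

instance (hF : F ∈ m0Set) : IsProbabilityMeasure (cdfMeasure hF) :=
  StieltjesFunction.isProbabilityMeasure _ hF.2.2.1 hF.2.2.2

lemma cdfMeasure_real_Iic (hF : F ∈ m0Set) (x : ℝ) : (cdfMeasure hF).real (Iic x) = F x := by
  rw [← ProbabilityTheory.cdf_eq_real, cdfMeasure,
    ProbabilityTheory.cdf_measure_stieltjesFunction _ hF.2.2.1 hF.2.2.2]

lemma utilityT_apply (hF : F ∈ m0Set) (hu : Measurable u) (y : ℝ) :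
    utilityT u F y = (cdfMeasure hF).real (u ⁻¹' Iic y) := by
  rw [utilityT, dif_pos ⟨hF.1, hF.2.1⟩, Measure.map_apply hu measurableSet_Iic]
  rfl

lemma utilityT_eq_cdf (hF : F ∈ m0Set) (hu : Measurable u) :
    utilityT u F = ProbabilityTheory.cdf ((cdfMeasure hF).map u) := by
  have := Measure.isProbabilityMeasure_map (μ := cdfMeasure hF) hu.aemeasurable
  ext y
  rw [utilityT_apply hF hu, ProbabilityTheory.cdf_eq_real,
    map_measureReal_apply hu measurableSet_Iic]

lemma le_utilityT (hF : F ∈ m0Set) (hu : Monotone u) (hxy : u x ≤ y) :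
    F x ≤ utilityT u F y := by
  rw [utilityT_apply hF hu.measurable, ← cdfMeasure_real_Iic hF]
  exact measureReal_mono fun z hz => (hu hz).trans hxy

lemma utilityT_le (hF : F ∈ m0Set) (hu : Monotone u) (hyx : y < u x) :
    utilityT u F y ≤ F x := by
  rw [utilityT_apply hF hu.measurable, ← cdfMeasure_real_Iic hF]
  exact measureReal_mono fun z hz => (hu.reflect_lt (lt_of_le_of_lt hz hyx)).le

lemma utilityT_mem_m0Set (hF : F ∈ m0Set) (hu : Measurable u) : utilityT u F ∈ m0Set := by
  rw [utilityT_eq_cdf hF hu]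
  exact ⟨ProbabilityTheory.monotone_cdf _, (ProbabilityTheory.cdf _).right_continuous,
    ProbabilityTheory.tendsto_cdf_atBot _, ProbabilityTheory.tendsto_cdf_atTop _⟩

lemma utilityT_mem_mSet (hF : F ∈ mSet) (hu : Monotone u) : utilityT u F ∈ mSet := by
  have hF₀ := mSet_subset_m0Set hF
  have hT := utilityT_mem_m0Set hF₀ hu.measurable
  have hI := mem_Icc_of_mem_m0Set hT
  obtain ⟨-, -, ⟨a, ha⟩, ⟨b, hb⟩⟩ := hF
  refine ⟨hT.1, hT.2.1, ⟨u a - 1, fun y hy => ?_⟩, ⟨u b, fun y hy => ?_⟩⟩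
  · exact le_antisymm ((utilityT_le hF₀ hu (by linarith)).trans_eq (ha a le_rfl)) (hI y).1
  · exact le_antisymm (hI y).2 ((hb b le_rfl).symm.trans_le (le_utilityT hF₀ hu hy))

lemma leftQ_utilityT (hu : IsLeftCtsIncr u) (hF : F ∈ mSet) (hp : p ∈ Ioc (0 : ℝ) 1) :
    leftQ (utilityT u F) p = u (leftQ F p) := by
  have hF₀ := mSet_subset_m0Set hF
  refine eq_of_forall_ge_iff fun y => ?_
  rw [leftQ_le_iff (utilityT_mem_mSet hF hu.1) hp]
  refine ⟨fun hpy => ?_, fun huy => ?_⟩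
  · by_contra! hlt
    obtain ⟨z, hyz, hz⟩ : ∃ z, y < u z ∧ z < leftQ F p :=
      (((hu.2 _).mono Iio_subset_Iic_self).eventually_const_lt hlt |>.and
        self_mem_nhdsWithin).exists
    exact hpy.not_gt ((utilityT_le hF₀ hu.1 hyz).trans_lt ((lt_leftQ_iff hF hp).1 hz))
  · exact ((leftQ_le_iff hF hp).1 le_rfl).trans (le_utilityT hF₀ hu.1 huy)

end Utility

lemma utilityT_distortT_comm {u d F : ℝ → ℝ} (hu : IsLeftCtsIncr u) (hd : IsDF d)
    (hr : DFRightCts d) (hF : F ∈ mSet) :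
    utilityT u (distortT d F) = distortT d (utilityT u F) := by
  have hdF := comp_mem_mSet hd hr hF
  have huF := utilityT_mem_mSet hF hu.1
  rw [distortT_eq_comp hd hr hF, distortT_eq_comp hd hr huF]
  refine eq_of_forall_leftQ_eq (utilityT_mem_mSet hdF hu.1) (comp_mem_mSet hd hr huF)
    fun p hp => ?_
  obtain ⟨s, hs, hleftQ⟩ := exists_leftQ_comp_eq hd hr hp
  calc leftQ (utilityT u (d ∘ F)) p
      = u (leftQ (d ∘ F) p) := leftQ_utilityT hu hdF hp
    _ = u (leftQ F s) := by rw [hleftQ F hF]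
    _ = leftQ (utilityT u F) s := (leftQ_utilityT hu hF hs).symm
    _ = leftQ (d ∘ utilityT u F) p := (hleftQ _ huF).symm

section Step

/-- The unit step at `p`, in two roles: it is the cdf of the point mass at `p`, and, for
`p ∈ (0, 1]`, a right-continuous distortion function. -/
def step (p : ℝ) : ℝ → ℝ := fun x => if p ≤ x then 1 else 0

variable {p : ℝ}

lemma isDF_step (hp : p ∈ Ioc (0 : ℝ) 1) : IsDF (step p) := by
  refine ⟨fun x _ y _ hxy => ?_, if_neg hp.1.not_ge, if_pos hp.2⟩
  unfold step
  split_ifs with hx hy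
  · exact le_rfl
  · exact absurd (hx.trans hxy) hy
  · exact zero_le_one
  · exact le_rfl

lemma dfRightCts_step (p : ℝ) : DFRightCts (step p) := by
  intro x _
  rcases le_or_gt p x with h | h
  · exact continuousWithinAt_const.congr (fun y hy => if_pos (h.trans (le_of_lt hy))) (if_pos h)
  · have hzero : step p =ᶠ[𝓝 x] fun _ => 0 := by
      filter_upwards [Iio_mem_nhds h] with y hy using if_neg (not_le.2 hy)
    exact (continuousAt_const.congr hzero.symm).continuousWithinAt

lemma step_comp (hp : p ∈ Ioc (0 : ℝ) 1) {F : ℝ → ℝ} (hF : F ∈ mSet) :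
    step p ∘ F = step (leftQ F p) := by
  ext x
  simp only [Function.comp_apply, step, leftQ_le_iff hF hp]

lemma leftQ_step_comp (p : ℝ) (F : ℝ → ℝ) : leftQ (step p ∘ F) 1 = leftQ F p := by
  have hone : ∀ x, 1 ≤ step p (F x) ↔ p ≤ F x := fun x => by
    unfold step
    split_ifs with h <;> simp [h]
  simp only [leftQ, Function.comp_apply, hone]

end Step

section Recovery

/-- `T` commutes with every step distortion `T_d`, `d = 1_{[p, ∞)}` with `p ∈ (0, 1]`. As `d` is
right-continuous, `T_d` is written as composition with `d`. -/
def CommutesWithSteps (T : (ℝ → ℝ) → ℝ → ℝ) : Prop :=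
  ∀ p ∈ Ioc (0 : ℝ) 1, ∀ F ∈ mSet, T (step p ∘ F) = step p ∘ T F

/-- The utility function that a map `T` acts by on point masses: the left `1`-quantile of the image
of the point mass at `q`. -/
def pointUtility (T : (ℝ → ℝ) → ℝ → ℝ) (q : ℝ) : ℝ := leftQ (T (step q)) 1

variable {T : (ℝ → ℝ) → ℝ → ℝ}

lemma commutesWithSteps_of_commutes (hT : ∀ F ∈ mSet, T F ∈ mSet)
    (hcomm : ∀ d, IsDF d → DFRightCts d → ∀ F ∈ mSet, T (distortT d F) = distortT d (T F)) :
    CommutesWithSteps T := by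
  intro p hp F hF
  have hd := isDF_step hp
  have hr := dfRightCts_step p
  rw [← distortT_eq_comp hd hr hF, ← distortT_eq_comp hd hr (hT F hF), hcomm _ hd hr F hF]

lemma leftQ_map (hcomm : CommutesWithSteps T) {F : ℝ → ℝ} (hF : F ∈ mSet) {p : ℝ}
    (hp : p ∈ Ioc (0 : ℝ) 1) : leftQ (T F) p = pointUtility T (leftQ F p) :=
  calc leftQ (T F) p
      = leftQ (step p ∘ T F) 1 := (leftQ_step_comp p (T F)).symm
    _ = leftQ (T (step p ∘ F)) 1 := by rw [hcomm p hp F hF]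
    _ = leftQ (T (step (leftQ F p))) 1 := by rw [step_comp hp hF]

lemma pointUtility_eq_leftQ_uniformCdf (hcomm : CommutesWithSteps T) {a b x : ℝ}
    (hx : x ∈ Ioc a b) :
    pointUtility T x = leftQ (T (uniformCdf a b)) ((x - a) / (b - a)) := by
  rw [leftQ_map hcomm (uniformCdf_mem_mSet (hx.1.trans_le hx.2)) (sub_div_sub_mem_Ioc hx),
    leftQ_uniformCdf hx]

lemma monotone_pointUtility (hT : ∀ F ∈ mSet, T F ∈ mSet) (hcomm : CommutesWithSteps T) :
    Monotone (pointUtility T) := by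
  intro x y hxy
  have hx : x ∈ Ioc (x - 1) y := ⟨by linarith, hxy⟩
  have hy : y ∈ Ioc (x - 1) y := ⟨by linarith, le_rfl⟩
  have hlen : 0 ≤ y - (x - 1) := by linarith
  rw [pointUtility_eq_leftQ_uniformCdf hcomm hx, pointUtility_eq_leftQ_uniformCdf hcomm hy]
  exact monotoneOn_leftQ (hT _ (uniformCdf_mem_mSet (by linarith))) (sub_div_sub_mem_Ioc hx)
    (sub_div_sub_mem_Ioc hy) (by gcongr)

lemma continuousWithinAt_pointUtility (hT : ∀ F ∈ mSet, T F ∈ mSet)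
    (hcomm : CommutesWithSteps T) (x : ℝ) :
    ContinuousWithinAt (pointUtility T) (Iic x) x := by
  have hx : x ∈ Ioc (x - 1) x := ⟨by linarith, le_rfl⟩
  have hlen : 0 ≤ x - (x - 1) := by linarith
  have hquantile : ContinuousWithinAt
      (fun z => leftQ (T (uniformCdf (x - 1) x)) ((z - (x - 1)) / (x - (x - 1)))) (Iic x) x :=
    (continuousWithinAt_leftQ (hT _ (uniformCdf_mem_mSet hx.1)) (sub_div_sub_mem_Ioc hx)).comp
      (f := fun z => (z - (x - 1)) / (x - (x - 1))) (by fun_prop)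
      fun z (hz : z ≤ x) => by simp only [mem_Iic]; gcongr
  refine hquantile.congr_of_eventuallyEq ?_ (pointUtility_eq_leftQ_uniformCdf hcomm hx)
  filter_upwards [Ioc_mem_nhdsLE hx.1] with z hz using pointUtility_eq_leftQ_uniformCdf hcomm hz

lemma isLeftCtsIncr_pointUtility (hT : ∀ F ∈ mSet, T F ∈ mSet)
    (hcomm : CommutesWithSteps T) : IsLeftCtsIncr (pointUtility T) :=
  ⟨monotone_pointUtility hT hcomm, continuousWithinAt_pointUtility hT hcomm⟩

lemma eq_utilityT_pointUtility (hT : ∀ F ∈ mSet, T F ∈ mSet) (hcomm : CommutesWithSteps T)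
    {F : ℝ → ℝ} (hF : F ∈ mSet) : T F = utilityT (pointUtility T) F := by
  have hu := isLeftCtsIncr_pointUtility hT hcomm
  refine eq_of_forall_leftQ_eq (hT F hF) (utilityT_mem_mSet hF hu.1) fun p hp => ?_
  rw [leftQ_map hcomm hF hp, leftQ_utilityT hu hF hp]

end Recovery

/-- A map `T : M → M` commutes with the probability distortion `T_d` for every
right-continuous distortion function `d` if and only if `T = T^u` for some
increasing left-continuous `u : ℝ → ℝ`. -/
theorem stmt7 (T : (ℝ → ℝ) → ℝ → ℝ) (hT : ∀ F ∈ mSet, T F ∈ mSet) :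
    (∀ d : ℝ → ℝ, IsDF d → DFRightCts d → ∀ F ∈ mSet,
        T (distortT d F) = distortT d (T F)) ↔
      ∃ u : ℝ → ℝ, IsLeftCtsIncr u ∧ ∀ F ∈ mSet, T F = utilityT u F := by
  constructor
  · intro hcomm
    have hsteps := commutesWithSteps_of_commutes hT hcomm
    exact ⟨pointUtility T, isLeftCtsIncr_pointUtility hT hsteps,
      fun F hF => eq_utilityT_pointUtility hT hsteps hF⟩
  · rintro ⟨u, hu, hTu⟩ d hd hr F hF
    have hdF : distortT d F ∈ mSet := distortT_eq_comp hd hr hF ▸ comp_mem_mSet hd hr hF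
    rw [hTu _ hdF, hTu F hF, utilityT_distortT_comm hu hd hr hF]
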